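/- arXiv:1305.1309 — 5 statements merged into one kernel-verified Lean document; each statement's English description precedes it below -/
import Mathlib

section
/- Let N ≥ 2 and let L be an N×N real matrix. Suppose there are real numbers λ₁,…,λ_N with λ₁ = 0 and λ_i ≠ 0 for i ≥ 2, and vectors φ₁,…,φ_N and ψ₁,…,ψ_N in ℝ^N such that: each φ_i is a left eigenvector of L for λ_i (φ_iᵀ L = λ_i φ_iᵀ), each ψ_i is a right eigenvector of L for λ_i (L ψ_i = λ_i ψ_i), the dot product satisfies φ_i · ψ_j = 0 if and only if i ≠ j, and φ₁ = ψ₁ = (1,1,…,1). Let α, β be two indices, let I be a nonzero real number, and let V ∈ ℝ^N satisfy L V = I·(e_α − e_β), where e_α, e_β are standard basis vectors. Then (V_α − V_β)/I = Σ_{i=2}^{N} (φ_{iα} − φ_{iβ})(ψ_{iα} − ψ_{iβ}) / (λ_i (φ_i · ψ_i)). -/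
open Matrix Finset

/-!
Biorthogonality makes the `ψ i` a basis whose dual basis is `φ i / (φ i ⬝ᵥ ψ i)`. Pairing
`L V = w` with the left eigenvector `φ i` gives `μ i * (φ i ⬝ᵥ V) = φ i ⬝ᵥ w`, which determines the
`ψ i`-coordinate of `V` when `μ i ≠ 0`. The remaining coordinates are invisible to `V α - V β` as
soon as the corresponding `ψ i` do not separate `α` from `β`.
-/

section Biorthogonal

variable {K ι n : Type*} [Field K] [Fintype ι] [Fintype n] {φ ψ : ι → n → K}

theorem sum_smul_eq_of_biorthogonal (hcard : Fintype.card ι = Fintype.card n)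
    (horth : ∀ i j, φ i ⬝ᵥ ψ j = 0 ↔ i ≠ j) (v : n → K) :
    ∑ i, (φ i ⬝ᵥ v / φ i ⬝ᵥ ψ i) • ψ i = v := by
  classical
  let P : Matrix ι n K := .of φ
  let Q : Matrix n ι K := .of fun k i ↦ ψ i k / φ i ⬝ᵥ ψ i
  have hPQ : P * Q = 1 := by
    ext i j
    have hentry : (P * Q) i j = φ i ⬝ᵥ ψ j / φ j ⬝ᵥ ψ j := by
      simp only [P, Q, mul_apply, of_apply, dotProduct, sum_div, mul_div_assoc]
    rcases eq_or_ne i j with rfl | hij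
    · rw [hentry, one_apply_eq, div_self fun h ↦ (horth i i).1 h rfl]
    · rw [hentry, one_apply_ne hij, (horth i j).2 hij, zero_div]
  have hQP : Q * P = 1 := (mul_eq_one_comm_of_card_eq _ _ _ hcard).1 hPQ
  calc
    ∑ i, (φ i ⬝ᵥ v / φ i ⬝ᵥ ψ i) • ψ i = Q *ᵥ (P *ᵥ v) := by
      ext k
      rw [Finset.sum_apply]
      exact sum_congr rfl fun i _ ↦ div_mul_comm _ _ _
    _ = v := by rw [mulVec_mulVec, hQP, one_mulVec]

theorem dotProduct_mulVec_of_vecMul_eq_smul {R : Type*} [NonUnitalSemiring R]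
    {L : Matrix n n R} {μ : R} {u : n → R} (hu : u ᵥ* L = μ • u) (v : n → R) :
    u ⬝ᵥ L *ᵥ v = μ * (u ⬝ᵥ v) := by
  rw [dotProduct_mulVec, hu, smul_dotProduct, smul_eq_mul]

theorem dotProduct_eq_sum_of_biorthogonal_of_vecMul_eq_smul {L : Matrix n n K} {μ : ι → K}
    (hcard : Fintype.card ι = Fintype.card n) (horth : ∀ i j, φ i ⬝ᵥ ψ j = 0 ↔ i ≠ j)
    {s : Finset ι} (hleft : ∀ i ∈ s, φ i ᵥ* L = μ i • φ i) (hμ : ∀ i ∈ s, μ i ≠ 0)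
    {u : n → K} (hu : ∀ i ∉ s, u ⬝ᵥ ψ i = 0) (v : n → K) :
    u ⬝ᵥ v = ∑ i ∈ s, (φ i ⬝ᵥ L *ᵥ v) * (u ⬝ᵥ ψ i) / (μ i * (φ i ⬝ᵥ ψ i)) := by
  calc
    u ⬝ᵥ v = ∑ i, φ i ⬝ᵥ v / φ i ⬝ᵥ ψ i * (u ⬝ᵥ ψ i) := by
      conv_lhs => rw [← sum_smul_eq_of_biorthogonal hcard horth v]
      simp only [dotProduct_sum, dotProduct_smul, smul_eq_mul]
    _ = ∑ i ∈ s, φ i ⬝ᵥ v / φ i ⬝ᵥ ψ i * (u ⬝ᵥ ψ i) :=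
      (sum_subset (subset_univ s) fun i _ hi ↦ by rw [hu i hi, mul_zero]).symm
    _ = ∑ i ∈ s, (φ i ⬝ᵥ L *ᵥ v) * (u ⬝ᵥ ψ i) / (μ i * (φ i ⬝ᵥ ψ i)) := by
      refine sum_congr rfl fun i hi ↦ ?_
      rw [dotProduct_mulVec_of_vecMul_eq_smul (hleft i hi), mul_assoc,
        mul_div_mul_left _ _ (hμ i hi), div_mul_eq_mul_div]

theorem two_point_resistance_nonsymmetric_general [DecidableEq n] {L : Matrix n n K} {μ : ι → K}
    (hcard : Fintype.card ι = Fintype.card n) (horth : ∀ i j, φ i ⬝ᵥ ψ j = 0 ↔ i ≠ j)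
    {s : Finset ι} (hleft : ∀ i ∈ s, φ i ᵥ* L = μ i • φ i) (hμ : ∀ i ∈ s, μ i ≠ 0)
    {α β : n} (hψ : ∀ i ∉ s, ψ i α = ψ i β) {I : K} (hI : I ≠ 0) {V : n → K}
    (hV : L *ᵥ V = I • (Pi.single α 1 - Pi.single β 1)) :
    (V α - V β) / I =
      ∑ i ∈ s, (φ i α - φ i β) * (ψ i α - ψ i β) / (μ i * (φ i ⬝ᵥ ψ i)) := by
  have hdiff (v : n → K) : (Pi.single α 1 - Pi.single β 1) ⬝ᵥ v = v α - v β := by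
    rw [sub_dotProduct, single_one_dotProduct, single_one_dotProduct]
  have hsource (i : ι) : φ i ⬝ᵥ L *ᵥ V = I * (φ i α - φ i β) := by
    rw [hV, dotProduct_smul, dotProduct_comm, hdiff, smul_eq_mul]
  have hexpand := dotProduct_eq_sum_of_biorthogonal_of_vecMul_eq_smul hcard horth hleft hμ
    (u := Pi.single α 1 - Pi.single β 1) (fun i hi ↦ by rw [hdiff, hψ i hi, sub_self]) V
  simp only [hdiff, hsource, mul_assoc, mul_div_assoc, ← mul_sum] at hexpand
  simp only [hexpand, mul_div_cancel_left₀ _ hI, mul_div_assoc]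

end Biorthogonal

theorem two_point_resistance_nonsymmetric
    {N : ℕ} (hN : 2 ≤ N) (L : Matrix (Fin N) (Fin N) ℝ)
    (lam : Fin N → ℝ) (φ ψ : Fin N → Fin N → ℝ)
    (hlam0 : lam ⟨0, by omega⟩ = 0)
    (hlamne : ∀ i : Fin N, i ≠ ⟨0, by omega⟩ → lam i ≠ 0)
    (hleft : ∀ i, Matrix.vecMul (φ i) L = lam i • φ i)
    (hright : ∀ i, L.mulVec (ψ i) = lam i • ψ i)
    (horth : ∀ i j, φ i ⬝ᵥ ψ j = 0 ↔ i ≠ j)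
    (hφ1 : φ ⟨0, by omega⟩ = fun _ => 1)
    (hψ1 : ψ ⟨0, by omega⟩ = fun _ => 1)
    (α β : Fin N) (I : ℝ) (hI : I ≠ 0) (V : Fin N → ℝ)
    (hV : L.mulVec V = I • (Pi.single α 1 - Pi.single β 1)) :
    (V α - V β) / I =
      ∑ i ∈ Finset.univ.erase ⟨0, by omega⟩,
        (φ i α - φ i β) * (ψ i α - ψ i β) / (lam i * (φ i ⬝ᵥ ψ i)) := by
  refine two_point_resistance_nonsymmetric_general rfl horth (fun i _ ↦ hleft i)
    (fun i hi ↦ hlamne i (ne_of_mem_erase hi)) (fun i hi ↦ ?_) hI hV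
  obtain rfl : i = ⟨0, by omega⟩ := by simpa using hi
  rw [hψ1]
end

section
/- Let N ≥ 2 and let L be a symmetric N×N real matrix. Suppose ψ₁,…,ψ_N form an orthonormal family in ℝ^N with L ψ_i = λ_i ψ_i for real numbers λ₁,…,λ_N, where λ₁ = 0, λ_i ≠ 0 for i ≥ 2, and ψ₁ = (1/√N,…,1/√N). Let α, β be two indices, I a nonzero real number, and V ∈ ℝ^N with L V = I·(e_α − e_β). Then (V_α − V_β)/I = Σ_{i=2}^{N} (ψ_{iα} − ψ_{iβ})² / λ_i. -/
open Matrix Finset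

/-!
Expanding in the orthonormal eigenbasis `ψ` shows that `L V = u` reads `λᵢ (ψᵢ · V) = ψᵢ · u` in
coordinates. Hence modes with `λᵢ = 0` satisfy `ψᵢ · u = 0` and drop out of Parseval's identity
`u · V = ∑ᵢ (ψᵢ · u) (ψᵢ · V)`, while the others contribute `(ψᵢ · u)² / λᵢ`. For
`u = I (e_α - e_β)` the left-hand side is `I (V_α - V_β)`.
-/

section OrthonormalExpansion

variable {ι R : Type*} [Fintype ι] [DecidableEq ι] [CommSemiring R] {ψ : ι → ι → R}

theorem sum_dotProduct_smul_eq_self_of_orthonormal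
    (horth : ∀ i j, ψ i ⬝ᵥ ψ j = if i = j then 1 else 0) (v : ι → R) :
    ∑ i, (ψ i ⬝ᵥ v) • ψ i = v := by
  have mul_transpose : of ψ * (of ψ)ᵀ = 1 := by
    ext i j
    rw [one_apply, ← horth i j]
    rfl
  have transpose_mul : (of ψ)ᵀ * of ψ = 1 := mul_eq_one_comm.mp mul_transpose
  calc ∑ i, (ψ i ⬝ᵥ v) • ψ i = (of ψ)ᵀ *ᵥ (of ψ *ᵥ v) := by
        rw [mulVec_transpose, vecMul_eq_sum]; rfl
    _ = v := by rw [mulVec_mulVec, transpose_mul, one_mulVec]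

theorem dotProduct_eq_sum_mul_of_orthonormal
    (horth : ∀ i j, ψ i ⬝ᵥ ψ j = if i = j then 1 else 0) (u v : ι → R) :
    u ⬝ᵥ v = ∑ i, (ψ i ⬝ᵥ u) * (ψ i ⬝ᵥ v) := by
  calc u ⬝ᵥ v = (∑ i, (ψ i ⬝ᵥ u) • ψ i) ⬝ᵥ v := by
        rw [sum_dotProduct_smul_eq_self_of_orthonormal horth]
    _ = ∑ i, (ψ i ⬝ᵥ u) * (ψ i ⬝ᵥ v) := by
        simp only [sum_dotProduct, smul_dotProduct, smul_eq_mul]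

theorem dotProduct_mulVec_of_orthonormal_eigenvectors {L : Matrix ι ι R} {lam : ι → R}
    (horth : ∀ i j, ψ i ⬝ᵥ ψ j = if i = j then 1 else 0)
    (heig : ∀ i, L *ᵥ ψ i = lam i • ψ i) (v : ι → R) (j : ι) :
    ψ j ⬝ᵥ (L *ᵥ v) = lam j * (ψ j ⬝ᵥ v) := by
  have mulVec_expansion : L *ᵥ v = ∑ i, (ψ i ⬝ᵥ v) • lam i • ψ i := by
    conv_lhs => rw [← sum_dotProduct_smul_eq_self_of_orthonormal horth v]
    simp only [mulVec_sum, mulVec_smul, heig]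
  simp [mulVec_expansion, dotProduct_sum, horth, mul_comm]

end OrthonormalExpansion

section Field

variable {ι K : Type*} [Fintype ι] [DecidableEq ι] [Field K] [DecidableEq K]
  {L : Matrix ι ι K} {lam : ι → K} {ψ : ι → ι → K}

theorem mulVec_dotProduct_eq_sum_sq_div_of_orthonormal_eigenvectors
    (horth : ∀ i j, ψ i ⬝ᵥ ψ j = if i = j then 1 else 0)
    (heig : ∀ i, L *ᵥ ψ i = lam i • ψ i) (v : ι → K) :
    (L *ᵥ v) ⬝ᵥ v = ∑ i with lam i ≠ 0, (ψ i ⬝ᵥ (L *ᵥ v)) ^ 2 / lam i := by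
  have coord := dotProduct_mulVec_of_orthonormal_eigenvectors horth heig v
  rw [dotProduct_eq_sum_mul_of_orthonormal horth, sum_filter]
  refine sum_congr rfl fun i _ => ?_
  split_ifs with hi
  · rw [coord]
    field_simp
  · rw [coord, not_not.mp hi, zero_mul, zero_mul]

theorem two_point_resistance_symmetric_general
    (horth : ∀ i j, ψ i ⬝ᵥ ψ j = if i = j then 1 else 0)
    (heig : ∀ i, L *ᵥ ψ i = lam i • ψ i)
    (α β : ι) {I : K} (hI : I ≠ 0) {V : ι → K}
    (hV : L *ᵥ V = I • (Pi.single α 1 - Pi.single β 1)) :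
    (V α - V β) / I = ∑ i with lam i ≠ 0, (ψ i α - ψ i β) ^ 2 / lam i := by
  have power : I * (V α - V β) = I ^ 2 * ∑ i with lam i ≠ 0, (ψ i α - ψ i β) ^ 2 / lam i := by
    simpa only [hV, smul_dotProduct, dotProduct_smul, sub_dotProduct, dotProduct_sub,
      single_one_dotProduct, dotProduct_single_one, smul_eq_mul, mul_pow, mul_div_assoc, ← mul_sum]
      using mulVec_dotProduct_eq_sum_sq_div_of_orthonormal_eigenvectors horth heig V
  rw [div_eq_iff hI]
  exact mul_left_cancel₀ hI (by linear_combination power)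

end Field

theorem two_point_resistance_symmetric
    {N : ℕ} (hN : 2 ≤ N) (L : Matrix (Fin N) (Fin N) ℝ)
    (hsym : L.IsSymm)
    (lam : Fin N → ℝ) (ψ : Fin N → Fin N → ℝ)
    (horth : ∀ i j, ψ i ⬝ᵥ ψ j = if i = j then 1 else 0)
    (heig : ∀ i, L.mulVec (ψ i) = lam i • ψ i)
    (hlam0 : lam ⟨0, by omega⟩ = 0)
    (hlamne : ∀ i : Fin N, i ≠ ⟨0, by omega⟩ → lam i ≠ 0)
    (hψ1 : ψ ⟨0, by omega⟩ = fun _ => 1 / Real.sqrt N)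
    (α β : Fin N) (I : ℝ) (hI : I ≠ 0) (V : Fin N → ℝ)
    (hV : L.mulVec V = I • (Pi.single α 1 - Pi.single β 1)) :
    (V α - V β) / I =
      ∑ i ∈ Finset.univ.erase ⟨0, by omega⟩,
        (ψ i α - ψ i β) ^ 2 / lam i := by
  have nonzero_modes : ({i | lam i ≠ 0} : Finset (Fin N)) = univ.erase ⟨0, by omega⟩ := by
    ext i
    simpa using ⟨fun hi h => hi (h ▸ hlam0), hlamne i⟩
  rw [← nonzero_modes, two_point_resistance_symmetric_general horth heig α β hI hV]
end

section
/- Let c₁ > 0, c₂ > 0 and G ≥ 0 be real numbers and let L be the 4×4 real matrix with rows (2c₁, −c₁, 0, −c₁), (−c₁+G, 2c₁+c₂, −c₁, −c₂−G), (0, −c₁, 2c₁, −c₁), (−c₁−G, −c₂, −c₁, 2c₁+c₂+G). Let I ≠ 0 be real and let V ∈ ℝ⁴ satisfy L V = I·(e₂ − e₄), where e₂ and e₄ are the standard basis vectors for the second and fourth coordinates. Then (V₂ − V₄)/I = 2/(2c₁ + 2c₂ + G); equivalently, writing R₁ = 1/c₁ and R₂ = 1/c₂, the resistance between nodes 2 and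 4 equals 2R₁R₂/(2R₁ + 2R₂ + G·R₁R₂). -/
open Matrix

/-!
No current enters the two nodes off the diagonal `1 – 3`, so each of them sits at the mean of the
potentials `V 1` and `V 3`. Substituting this into the current balance at node `1` leaves Ohm's law
with conductance `(2 * c₁ + 2 * c₂ + G) / 2` between the nodes `1` and `3`.
-/

section CommRing

variable {R : Type*} [CommRing R] (c₁ c₂ G : R) (V : Fin 4 → R)

/-- The nodal conductance matrix of the bridge network: conductances `c₁` along the 4-cycle
`0 – 1 – 2 – 3 – 0`, conductance `c₂` across the diagonal `1 – 3`, and a current `G * (V 0 - V 3)`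
driven from node `1` to node `3` by the controlled source. The paper's node `k` is the index
`k - 1`. -/
def bridgeLaplacian : Matrix (Fin 4) (Fin 4) R :=
  !![2 * c₁, -c₁, 0, -c₁;
     -c₁ + G, 2 * c₁ + c₂, -c₁, -c₂ - G;
     0, -c₁, 2 * c₁, -c₁;
     -c₁ - G, -c₂, -c₁, 2 * c₁ + c₂ + G]

theorem bridgeLaplacian_mulVec_zero :
    (bridgeLaplacian c₁ c₂ G *ᵥ V) 0 = c₁ * (2 * V 0 - (V 1 + V 3)) :=
  calc (bridgeLaplacian c₁ c₂ G *ᵥ V) 0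
    _ = 2 * c₁ * V 0 + -c₁ * V 1 + 0 * V 2 + -c₁ * V 3 := by
      simp [bridgeLaplacian, mulVec, dotProduct, Fin.sum_univ_four]
    _ = _ := by ring

theorem bridgeLaplacian_mulVec_one :
    (bridgeLaplacian c₁ c₂ G *ᵥ V) 1 =
      c₁ * (2 * V 1 - (V 0 + V 2)) + c₂ * (V 1 - V 3) + G * (V 0 - V 3) :=
  calc (bridgeLaplacian c₁ c₂ G *ᵥ V) 1
    _ = (-c₁ + G) * V 0 + (2 * c₁ + c₂) * V 1 + -c₁ * V 2 + (-c₂ - G) * V 3 := by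
      simp [bridgeLaplacian, mulVec, dotProduct, Fin.sum_univ_four]
    _ = _ := by ring

theorem bridgeLaplacian_mulVec_two :
    (bridgeLaplacian c₁ c₂ G *ᵥ V) 2 = c₁ * (2 * V 2 - (V 1 + V 3)) :=
  calc (bridgeLaplacian c₁ c₂ G *ᵥ V) 2
    _ = 0 * V 0 + -c₁ * V 1 + 2 * c₁ * V 2 + -c₁ * V 3 := by
      simp [bridgeLaplacian, mulVec, dotProduct, Fin.sum_univ_four]
    _ = _ := by ring

variable {c₁ c₂ G V}

theorem two_mul_apply_zero_of_bridgeLaplacian_mulVec_eq_zero (hc₁ : IsLeftRegular c₁)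
    (h : (bridgeLaplacian c₁ c₂ G *ᵥ V) 0 = 0) : 2 * V 0 = V 1 + V 3 := by
  rw [bridgeLaplacian_mulVec_zero, hc₁.mul_left_eq_zero_iff] at h
  exact sub_eq_zero.mp h

theorem two_mul_apply_two_of_bridgeLaplacian_mulVec_eq_zero (hc₁ : IsLeftRegular c₁)
    (h : (bridgeLaplacian c₁ c₂ G *ᵥ V) 2 = 0) : 2 * V 2 = V 1 + V 3 := by
  rw [bridgeLaplacian_mulVec_two, hc₁.mul_left_eq_zero_iff] at h
  exact sub_eq_zero.mp h

theorem two_mul_bridgeLaplacian_mulVec_one (hc₁ : IsLeftRegular c₁)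
    (h₀ : (bridgeLaplacian c₁ c₂ G *ᵥ V) 0 = 0) (h₂ : (bridgeLaplacian c₁ c₂ G *ᵥ V) 2 = 0) :
    2 * (bridgeLaplacian c₁ c₂ G *ᵥ V) 1 = (2 * c₁ + 2 * c₂ + G) * (V 1 - V 3) := by
  have hV₀ : 2 * V 0 = V 1 + V 3 := two_mul_apply_zero_of_bridgeLaplacian_mulVec_eq_zero hc₁ h₀
  have hV₂ : 2 * V 2 = V 1 + V 3 := two_mul_apply_two_of_bridgeLaplacian_mulVec_eq_zero hc₁ h₂
  rw [bridgeLaplacian_mulVec_one]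
  linear_combination (G - c₁) * hV₀ - c₁ * hV₂

end CommRing

theorem bridge_resistance_R24_general {K : Type*} [Field K] [NeZero (2 : K)] {c₁ c₂ G I : K}
    {V : Fin 4 → K} (hc₁ : c₁ ≠ 0) (hI : I ≠ 0)
    (hV : bridgeLaplacian c₁ c₂ G *ᵥ V = I • (Pi.single 1 1 - Pi.single 3 1)) :
    (V 1 - V 3) / I = 2 / (2 * c₁ + 2 * c₂ + G) := by
  have h₀ : (bridgeLaplacian c₁ c₂ G *ᵥ V) 0 = 0 := by simp [hV]
  have h₁ : (bridgeLaplacian c₁ c₂ G *ᵥ V) 1 = I := by simp [hV]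
  have h₂ : (bridgeLaplacian c₁ c₂ G *ᵥ V) 2 = 0 := by simp [hV]
  have hohm : 2 * I = (2 * c₁ + 2 * c₂ + G) * (V 1 - V 3) := by
    simpa only [h₁] using
      two_mul_bridgeLaplacian_mulVec_one (mul_right_injective₀ hc₁) h₀ h₂
  have hden : 2 * c₁ + 2 * c₂ + G ≠ 0 :=
    left_ne_zero_of_mul (hohm ▸ mul_ne_zero two_ne_zero hI)
  rw [div_eq_div_iff hI hden, hohm, mul_comm]

theorem bridge_resistance_R24
    (c₁ c₂ G : ℝ) (hc₁ : 0 < c₁) (hc₂ : 0 < c₂) (hG : 0 ≤ G)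
    (L : Matrix (Fin 4) (Fin 4) ℝ)
    (hL : L = !![2*c₁, -c₁, 0, -c₁;
                 -c₁+G, 2*c₁+c₂, -c₁, -c₂-G;
                 0, -c₁, 2*c₁, -c₁;
                 -c₁-G, -c₂, -c₁, 2*c₁+c₂+G])
    (I : ℝ) (hI : I ≠ 0) (V : Fin 4 → ℝ)
    (hV : L.mulVec V = I • (Pi.single 1 1 - Pi.single 3 1)) :
    (V 1 - V 3) / I = 2 / (2*c₁ + 2*c₂ + G) := by
  subst hL
  exact bridge_resistance_R24_general hc₁.ne' hI hV
end

section
/- Let c₁ > 0 and G ≥ 0 be real numbers and let L be the 4×4 real matrix with rows (3c₁, −c₁, −c₁, −c₁), (−c₁, 3c₁, −c₁, −c₁), (−c₁+G, −c₁, 3c₁, −c₁−G), (−c₁−G, −c₁, −c₁, 3c₁+G). Let I ≠ 0 be real and let V ∈ ℝ⁴ satisfy L V = I·(e₁ − e₃). Then (V₁ − V₃)/I = 3/(4c₁) − 1/(4c₁ + G); that is, writing R = 1/c₁, the resistance between nodes 1 and 3 equals R·(3/4 − 1/(4 + GR)). -/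
open Matrix

/-!
The matrix `L` is `c₁` times the Laplacian of the complete graph plus the rank-one term
`G • (e₃ - e₄) (e₁ - e₄)ᵀ` of the controlled source (node `k` is the index `k - 1` of `Fin 4`).
On vectors of sum zero the Laplacian of the complete graph on `n` nodes acts as the scalar `n`.
Hence pairing `L V = J` with the control vector gives one scalar equation for the control
voltage, and pairing it with the vector of any other port then gives the voltage across that port.
-/

section CompleteGraph

variable {ι R : Type*} [Fintype ι] [DecidableEq ι] [CommRing R]

theorem lapMatrix_top_mulVec_apply (V : ι → R) (i : ι) :
    ((⊤ : SimpleGraph ι).lapMatrix R *ᵥ V) i = Fintype.card ι * V i - ∑ j, V j := by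
  have card_pos : 1 ≤ Fintype.card ι := Fintype.card_pos_iff.mpr ⟨i⟩
  rw [SimpleGraph.lapMatrix_mulVec_apply, SimpleGraph.complete_graph_degree,
    SimpleGraph.neighborFinset_top, Fintype.sum_eq_add_sum_compl i V,
    Nat.cast_sub card_pos, Nat.cast_one]
  ring

theorem dotProduct_lapMatrix_top_mulVec {y : ι → R} (hy : ∑ i, y i = 0) (V : ι → R) :
    y ⬝ᵥ ((⊤ : SimpleGraph ι).lapMatrix R *ᵥ V) = Fintype.card ι * (y ⬝ᵥ V) := by
  calc y ⬝ᵥ ((⊤ : SimpleGraph ι).lapMatrix R *ᵥ V)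
      = ∑ i, (Fintype.card ι * (y i * V i) - y i * ∑ j, V j) :=
        Finset.sum_congr rfl fun i _ ↦ by rw [lapMatrix_top_mulVec_apply]; ring
    _ = Fintype.card ι * (y ⬝ᵥ V) := by
        rw [Finset.sum_sub_distrib, ← Finset.mul_sum, ← Finset.sum_mul, hy, zero_mul, sub_zero,
          dotProduct]

/-- Nodal conductance matrix of the complete network with conductance `c` between any two nodes
and a voltage-controlled current source of transconductance `g`. The source draws the current
`g * (z ⬝ᵥ V) * w i` from node `i`; a source from node `p` to node `q` controlled by the voltage
between nodes `r` and `s` has `w = e_p - e_q` and `z = e_r - e_s`. -/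
def completeNetworkLaplacian (c g : R) (w z : ι → R) : Matrix ι ι R :=
  c • (⊤ : SimpleGraph ι).lapMatrix R + g • vecMulVec w z

theorem dotProduct_completeNetworkLaplacian_mulVec (c g : R) (w z : ι → R) {y : ι → R}
    (hy : ∑ i, y i = 0) (V : ι → R) :
    y ⬝ᵥ (completeNetworkLaplacian c g w z *ᵥ V) =
      Fintype.card ι * c * (y ⬝ᵥ V) + g * (y ⬝ᵥ w) * (z ⬝ᵥ V) := by
  simp only [completeNetworkLaplacian, add_mulVec, smul_mulVec, dotProduct_add, dotProduct_smul,
    dotProduct_lapMatrix_top_mulVec hy, vecMulVec_mulVec, op_smul_eq_smul, smul_eq_mul]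
  ring

end CompleteGraph

section Voltage

variable {ι K : Type*} [Fintype ι] [DecidableEq ι] [Field K] {c g : K} {w z J V : ι → K}

theorem control_voltage_eq (hz : ∑ i, z i = 0)
    (hzw : Fintype.card ι * c + g * (z ⬝ᵥ w) ≠ 0)
    (hV : completeNetworkLaplacian c g w z *ᵥ V = J) :
    z ⬝ᵥ V = z ⬝ᵥ J / (Fintype.card ι * c + g * (z ⬝ᵥ w)) := by
  rw [eq_div_iff hzw, ← hV, dotProduct_completeNetworkLaplacian_mulVec c g w z hz]
  ring

theorem port_voltage_eq {y : ι → K} (hy : ∑ i, y i = 0) (hz : ∑ i, z i = 0)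
    (hc : Fintype.card ι * c ≠ 0) (hzw : Fintype.card ι * c + g * (z ⬝ᵥ w) ≠ 0)
    (hV : completeNetworkLaplacian c g w z *ᵥ V = J) :
    y ⬝ᵥ V = (y ⬝ᵥ J - g * (y ⬝ᵥ w) * (z ⬝ᵥ J / (Fintype.card ι * c + g * (z ⬝ᵥ w)))) /
      (Fintype.card ι * c) := by
  rw [← control_voltage_eq hz hzw hV, eq_div_iff hc, ← hV,
    dotProduct_completeNetworkLaplacian_mulVec c g w z hy]
  ring

end Voltage

theorem completeNetworkLaplacian_fin_four {R : Type*} [CommRing R] (c g : R) :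
    completeNetworkLaplacian c g (Pi.single 2 1 - Pi.single 3 1)
        (Pi.single 0 1 - Pi.single 3 1) =
      !![3 * c, -c, -c, -c;
         -c, 3 * c, -c, -c;
         -c + g, -c, 3 * c, -c - g;
         -c - g, -c, -c, 3 * c + g] := by
  ext i j
  fin_cases i <;> fin_cases j <;>
    simp [completeNetworkLaplacian, SimpleGraph.lapMatrix, SimpleGraph.degMatrix,
      vecMulVec_apply, mul_comm, sub_eq_add_neg]

theorem complete_network_resistance_R13_general {K : Type*} [Field K] {c₁ G : K}
    (hc₁ : 4 * c₁ ≠ 0) (hcG : 4 * c₁ + G ≠ 0) {I : K} (hI : I ≠ 0) {V : Fin 4 → K}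
    (hV : !![3 * c₁, -c₁, -c₁, -c₁;
             -c₁, 3 * c₁, -c₁, -c₁;
             -c₁ + G, -c₁, 3 * c₁, -c₁ - G;
             -c₁ - G, -c₁, -c₁, 3 * c₁ + G] *ᵥ V = I • (Pi.single 0 1 - Pi.single 2 1)) :
    (V 0 - V 2) / I = 3 / (4 * c₁) - 1 / (4 * c₁ + G) := by
  rw [← completeNetworkLaplacian_fin_four] at hV
  have port_voltage : V 0 - V 2 = (I * 2 + G * (I / (4 * c₁ + G))) / (4 * c₁) := by
    have h := port_voltage_eq (y := Pi.single 0 1 - Pi.single 2 1) (by simp) (by simp)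
      (by simpa using hc₁) (by simpa [sub_dotProduct] using hcG) hV
    simpa [sub_dotProduct, one_add_one_eq_two] using h
  obtain ⟨four_ne_zero, c₁_ne_zero⟩ := mul_ne_zero_iff.mp hc₁
  rw [port_voltage]
  field_simp
  ring

theorem complete_network_resistance_R13
    (c₁ G : ℝ) (hc₁ : 0 < c₁) (hG : 0 ≤ G)
    (L : Matrix (Fin 4) (Fin 4) ℝ)
    (hL : L = !![3*c₁, -c₁, -c₁, -c₁;
                 -c₁, 3*c₁, -c₁, -c₁;
                 -c₁+G, -c₁, 3*c₁, -c₁-G;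
                 -c₁-G, -c₁, -c₁, 3*c₁+G])
    (I : ℝ) (hI : I ≠ 0) (V : Fin 4 → ℝ)
    (hV : L.mulVec V = I • (Pi.single 0 1 - Pi.single 2 1)) :
    (V 0 - V 2) / I = 3 / (4*c₁) - 1 / (4*c₁ + G) :=
  complete_network_resistance_R13_general (by positivity) (by positivity) hI (hL ▸ hV)
end

section
/- Let c₁ > 0 and G ≥ 0 be real numbers and let L be the 4×4 real matrix with rows (3c₁, −c₁, −c₁, −c₁), (−c₁, 3c₁, −c₁, −c₁), (−c₁+G, −c₁, 3c₁, −c₁−G), (−c₁−G, −c₁, −c₁, 3c₁+G). Let I ≠ 0 be real and let V ∈ ℝ⁴ satisfy L V = I·(e₁ − e₄). Then (V₁ − V₄)/I = 2/(4c₁ + G); that is, writing R = 1/c₁, the resistance between nodes 1 and 4 equals 2R/(4 + GR). -/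
open Matrix

/-!
The vector `e₁ - e₄` is a left eigenvector of the nodal matrix. The resistors contribute `4c₁` to
its eigenvalue, since `e₁ - e₄` has zero coordinate sum. The controlled source is the rank-one
matrix `G (e₃ - e₄)(e₁ - e₄)ᵀ` and contributes `G (e₁ - e₄) ⬝ (e₃ - e₄) = G`. Pairing
`L V = I (e₁ - e₄)` with `e₁ - e₄` therefore gives `(4c₁ + G)(V₁ - V₄) = 2I`.
-/

theorem mul_dotProduct_eq_of_vecMul_eq_smul {ι R : Type*} [Fintype ι] [CommSemiring R]
    {L : Matrix ι ι R} {w v b : ι → R} {μ : R} (hw : w ᵥ* L = μ • w) (hv : L *ᵥ v = b) :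
    μ * (w ⬝ᵥ v) = w ⬝ᵥ b := by
  rw [← hv, dotProduct_mulVec, hw, smul_dotProduct, smul_eq_mul]

section CompleteNetwork

variable {ι R : Type*} [Fintype ι] [DecidableEq ι] [CommRing R]

/-- The vector `e_a - e_b`: as a current vector, a unit current entering the network at `a` and
leaving it at `b`; as a covector, the voltage drop from `a` to `b`. -/
def dipole (a b : ι) : ι → R :=
  Pi.single a 1 - Pi.single b 1

/-- The nodal conductance matrix of the network on `ι` in which every two nodes are joined by a
conductance `c` and a voltage-controlled current source carries the current `G (V_a - V_b)` from
node `p` to node `q`. -/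
def completeNetworkMatrix (c G : R) (a b p q : ι) : Matrix ι ι R :=
  c • (⊤ : SimpleGraph ι).lapMatrix R + G • vecMulVec (dipole p q) (dipole a b)

theorem dipole_dotProduct (a b : ι) (v : ι → R) : dipole a b ⬝ᵥ v = v a - v b := by
  simp [dipole, sub_dotProduct]

theorem dipole_dotProduct_self {a b : ι} (hab : a ≠ b) :
    dipole a b ⬝ᵥ dipole a b = (2 : R) := by
  rw [dipole_dotProduct]
  simp [dipole, hab, hab.symm, one_add_one_eq_two]

theorem sum_dipole (a b : ι) : ∑ i, dipole a b i = (0 : R) := by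
  simp [dipole]

theorem vecMul_lapMatrix_top {v : ι → R} (hv : ∑ i, v i = 0) :
    v ᵥ* (⊤ : SimpleGraph ι).lapMatrix R = (Fintype.card ι : R) • v := by
  ext i
  have hsum : ∑ j ∈ Finset.univ.erase i, v j = -v i := by
    rw [Finset.sum_erase_eq_sub (Finset.mem_univ i), hv, zero_sub]
  have hdeg : ((Fintype.card ι - 1 : ℕ) : R) = Fintype.card ι - 1 :=
    Nat.cast_pred (Fintype.card_pos_iff.mpr ⟨i⟩)
  have hnbr : (⊤ : SimpleGraph ι).neighborFinset i = Finset.univ.erase i := by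
    ext j
    simp [eq_comm]
  rw [← mulVec_transpose, (SimpleGraph.isSymm_lapMatrix R ⊤).eq, SimpleGraph.lapMatrix_mulVec_apply,
    SimpleGraph.complete_graph_degree, hnbr, hsum, hdeg, Pi.smul_apply, smul_eq_mul]
  ring

theorem dipole_vecMul_completeNetworkMatrix (c G : R) (a b p q : ι) :
    dipole a b ᵥ* completeNetworkMatrix c G a b p q =
      (Fintype.card ι * c + G * (dipole a b ⬝ᵥ dipole p q)) • dipole a b := by
  rw [completeNetworkMatrix, vecMul_add, vecMul_smul, vecMul_smul,
    vecMul_lapMatrix_top (sum_dipole a b), vecMul_vecMulVec]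
  module

theorem complete_network_resistance_R14_general {K : Type*} [Field K] {c G I : K} {a b p q : ι}
    {V : ι → K} (hab : a ≠ b) (hI : I ≠ 0)
    (hcG : Fintype.card ι * c + G * (dipole a b ⬝ᵥ dipole p q) ≠ 0)
    (hV : completeNetworkMatrix c G a b p q *ᵥ V = I • dipole a b) :
    (V a - V b) / I = 2 / (Fintype.card ι * c + G * (dipole a b ⬝ᵥ dipole p q)) := by
  have hpair := mul_dotProduct_eq_of_vecMul_eq_smul
    (dipole_vecMul_completeNetworkMatrix c G a b p q) hV
  rw [dipole_dotProduct a b V, dotProduct_smul, dipole_dotProduct_self hab, smul_eq_mul] at hpair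
  rw [div_eq_div_iff hI hcG]
  linear_combination hpair

end CompleteNetwork

theorem completeNetworkMatrix_fin_four {R : Type*} [CommRing R] (c G : R) :
    completeNetworkMatrix c G (0 : Fin 4) 3 2 3 =
      !![3 * c, -c, -c, -c;
         -c, 3 * c, -c, -c;
         -c + G, -c, 3 * c, -c - G;
         -c - G, -c, -c, 3 * c + G] := by
  ext i j
  fin_cases i <;> fin_cases j <;>
    simp [completeNetworkMatrix, dipole, vecMulVec_apply, SimpleGraph.lapMatrix,
      SimpleGraph.degMatrix] <;> ring

theorem complete_network_resistance_R14
    (c₁ G : ℝ) (hc₁ : 0 < c₁) (hG : 0 ≤ G)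
    (L : Matrix (Fin 4) (Fin 4) ℝ)
    (hL : L = !![3*c₁, -c₁, -c₁, -c₁;
                 -c₁, 3*c₁, -c₁, -c₁;
                 -c₁+G, -c₁, 3*c₁, -c₁-G;
                 -c₁-G, -c₁, -c₁, 3*c₁+G])
    (I : ℝ) (hI : I ≠ 0) (V : Fin 4 → ℝ)
    (hV : L.mulVec V = I • (Pi.single 0 1 - Pi.single 3 1)) :
    (V 0 - V 3) / I = 2 / (4*c₁ + G) := by
  have hden : Fintype.card (Fin 4) * c₁ + G * (dipole (0 : Fin 4) 3 ⬝ᵥ dipole 2 3) =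
      4 * c₁ + G := by
    simp [dipole]
  rw [hL, ← completeNetworkMatrix_fin_four] at hV
  rw [← hden]
  exact complete_network_resistance_R14_general (by decide) hI (by rw [hden]; positivity) hV
end
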